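/- Let B ∈ GL_n(ℝ) be expansive with a symmetric positive definite K whose Hermitian norm satisfies ‖Bx‖_* ≥ λ‖x‖_* for some λ > 1, let I_* = {x : xᵗKx ≤ 1}, and fix c ∈ ℤ, d ∈ ℕ. Let p: ℝⁿ → ℝ be continuous and nonnegative with supp p = closure(B^c(I_*) \ B^{c−d−1}(I_*)) and p > 0 on the interior of this annulus. Define w(x) = ∑_{j∈ℤ} p(B^j x). Then for every x ≠ 0 the sum defining w(x) has at most d + 1 nonzero terms (indeed either d or d+1), and there exist constants 0 < c₀ < C₀ < ∞ such that c₀ < w(x) < C₀ for all x ∈ ℝⁿ \ {0}. -/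

import Mathlib

open MeasureTheory Complex Set
open scoped ENNReal Topology ComplexConjugate Classical

noncomputable section

abbrev ℝn (n : ℕ) := Fin n → ℝ

/-- The Fourier transform `f̂(ξ) = ∫ f(x) e^{-2πi⟨ξ,x⟩} dx` (pointwise integral). -/
def ftrans {n : ℕ} (f : ℝn n → ℂ) (ξ : ℝn n) : ℂ :=
  ∫ x : ℝn n, Complex.exp (-(2 * Real.pi * (∑ i, ξ i * x i)) * Complex.I) * f x

/-- `fhat` is the (L²-) Fourier transform of `f`, characterized by the multiplication
formula against Schwartz functions. -/
def IsFourierPair {n : ℕ} (fhat f : ℝn n → ℂ) : Prop :=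
  ∀ g : SchwartzMap (ℝn n) ℂ,
    ∫ ξ : ℝn n, fhat ξ * g ξ = ∫ x : ℝn n, f x * ftrans (fun y => g y) x

/-- Dilation operator `D_M f(x) = |det M|^{1/2} f(Mx)`. -/
def dila {n : ℕ} (M : Matrix (Fin n) (Fin n) ℝ) (f : ℝn n → ℂ) : ℝn n → ℂ :=
  fun x => (Real.sqrt |M.det| : ℂ) * f (M.mulVec x)

/-- Translation operator `T_y f(x) = f(x - y)`. -/
def tran {n : ℕ} (y : ℝn n) (f : ℝn n → ℂ) : ℝn n → ℂ :=
  fun x => f (x - y)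

/-- Inner product `⟨f, g⟩ = ∫ f ⬝ conj g` of two functions. -/
def ip {n : ℕ} (f g : ℝn n → ℂ) : ℂ := ∫ x : ℝn n, f x * conj (g x)

/-- The element of L² determined by a square-integrable function (junk value `0` otherwise). -/
def toL2 {n : ℕ} (f : ℝn n → ℂ) : Lp ℂ 2 (volume : Measure (ℝn n)) :=
  if h : MemLp f 2 volume then h.toLp f else 0

/-- `F` is a Bessel family with bound `C`. -/
def IsBesselWith {n : ℕ} {ι : Type*} (F : ι → ℝn n → ℂ) (C : ℝ) : Prop :=
  ∀ f : ℝn n → ℂ, MemLp f 2 volume →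
    ∑' i, ((‖ip f (F i)‖₊ : ℝ≥0∞)) ^ 2 ≤ ENNReal.ofReal C * ∫⁻ x, (‖f x‖₊ : ℝ≥0∞) ^ 2

/-- `F` is a frame with bounds `C₁, C₂`. -/
def IsFrameWith {n : ℕ} {ι : Type*} (F : ι → ℝn n → ℂ) (C₁ C₂ : ℝ) : Prop :=
  ∀ f : ℝn n → ℂ, MemLp f 2 volume →
    ENNReal.ofReal C₁ * (∫⁻ x, (‖f x‖₊ : ℝ≥0∞) ^ 2) ≤ ∑' i, ((‖ip f (F i)‖₊ : ℝ≥0∞)) ^ 2 ∧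
    ∑' i, ((‖ip f (F i)‖₊ : ℝ≥0∞)) ^ 2 ≤ ENNReal.ofReal C₂ * ∫⁻ x, (‖f x‖₊ : ℝ≥0∞) ^ 2

/-- Reconstruction property: `f = ∑ᵢ ⟨f, G i⟩ F i` for every `f ∈ L²`. -/
def ReconstructionProp {n : ℕ} {ι : Type*} (F G : ι → ℝn n → ℂ) : Prop :=
  ∀ f : ℝn n → ℂ, MemLp f 2 volume →
    HasSum (fun i => ip f (G i) • toL2 (F i)) (toL2 f)

/-- Two families are dual frames: both are Bessel and the reconstruction formula holds. -/
def AreDualFrames {n : ℕ} {ι : Type*} (F G : ι → ℝn n → ℂ) : Prop :=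
  (∃ C, IsBesselWith F C) ∧ (∃ C, IsBesselWith G C) ∧ ReconstructionProp F G

/-- A real matrix is expansive if all its (complex) eigenvalues have modulus `> 1`. -/
def IsExpansive {n : ℕ} (M : Matrix (Fin n) (Fin n) ℝ) : Prop :=
  ∀ μ : ℂ, (M.map Complex.ofReal).charpoly.IsRoot μ → 1 < ‖μ‖

/-- Integer vector viewed in `ℝⁿ`. -/
def ivec {n : ℕ} (k : Fin n → ℤ) : ℝn n := fun i => (k i : ℝ)

/-- Image of a set under (the linear map given by) a matrix. -/
def mimg {n : ℕ} (M : Matrix (Fin n) (Fin n) ℝ) (S : Set (ℝn n)) : Set (ℝn n) :=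
  (fun x => M.mulVec x) '' S

/-- The wavelet system `{D_{A^j} T_{Pk} ψ}_{j ∈ ℤ, k ∈ ℤⁿ}` with translation lattice `Pℤⁿ`. -/
def waveletSystem {n : ℕ} (A P : Matrix (Fin n) (Fin n) ℝ) (ψ : ℝn n → ℂ) :
    ℤ × (Fin n → ℤ) → ℝn n → ℂ :=
  fun p => dila (A ^ p.1) (tran (P.mulVec (ivec p.2)) ψ)

/-- `E` is a multiplicative tiling set for `{B^j}`. -/
def IsMultTiling {n : ℕ} (B : Matrix (Fin n) (Fin n) ℝ) (E : Set (ℝn n)) : Prop :=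
  0 < volume E ∧ volume (Set.univ \ ⋃ j : ℤ, mimg (B ^ j) E) = 0 ∧
    ∀ j l : ℤ, j ≠ l → volume (mimg (B ^ j) E ∩ mimg (B ^ l) E) = 0

/-- A bounded multiplicative tiling set. -/
def IsBoundedMultTiling {n : ℕ} (B : Matrix (Fin n) (Fin n) ℝ) (E : Set (ℝn n)) : Prop :=
  IsMultTiling B E ∧ Bornology.IsBounded E ∧ (0 : ℝn n) ∉ closure E

/-! On the orbit of `x ≠ 0` the values `N (T ^ k x)` grow geometrically in `k`, hence cross the
level `1` exactly once. The interior of the closure of the annulus is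
`{N (T⁻ᵇ x) < 1 < N (T⁻ᵃ x)}`, and it is exactly where `p` does not vanish; so the `j` with
`p (T ^ j x) ≠ 0` are the integers of an open interval, whose length depends only on whether the
orbit meets the unit sphere of `N`.

The periodization is invariant under `T`. On the compact annulus `{N x ≤ 1 ≤ N (T x)}`, which every
nonzero orbit meets, it is positive and a fixed finite sum of continuous functions, hence bounded
away from `0` and `∞`. -/

section GeometricGrowth

variable {u : ℤ → ℝ} {r : ℝ}

lemma strictMono_of_one_lt_of_mul_le_succ (hr : 1 < r) (hpos : ∀ k, 0 < u k)
    (hu : ∀ k, r * u k ≤ u (k + 1)) : StrictMono u :=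
  strictMono_int_of_lt_succ fun k =>
    (lt_mul_of_one_lt_left (hpos k) hr).trans_le (hu k)

lemma exists_int_forall_le_iff_of_mul_le_succ (hr : 1 < r) (hpos : ∀ k, 0 < u k)
    (hu : ∀ k, r * u k ≤ u (k + 1)) {y : ℝ} (hy : 0 < y) :
    ∃ m : ℤ, ∀ k, u k ≤ y ↔ k ≤ m := by
  have hmono := strictMono_of_one_lt_of_mul_le_succ hr hpos hu
  have hlarge : ∃ n : ℕ, y < u n :=
    ((tendsto_atTop_of_geom_le (hpos 0) hr fun n : ℕ => by
      exact_mod_cast hu n).eventually_gt_atTop y).exists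
  have hsmall : ∃ n : ℕ, u (-n) < y := by
    have hgrow (n : ℕ) : r * (u (-n))⁻¹ ≤ (u (-(n + 1 : ℕ)))⁻¹ := by
      have h := hu (-(n + 1 : ℕ))
      rw [show -((n + 1 : ℕ) : ℤ) + 1 = -n by push_cast; ring] at h
      rwa [← div_eq_mul_inv, div_le_iff₀ (hpos _), inv_mul_eq_div, le_div_iff₀ (hpos _)]
    obtain ⟨n, hn⟩ := ((tendsto_atTop_of_geom_le (v := fun n : ℕ => (u (-n))⁻¹)
      (inv_pos.mpr (hpos _)) hr hgrow).eventually_gt_atTop y⁻¹).exists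
    exact ⟨n, (inv_lt_inv₀ hy (hpos _)).mp hn⟩
  obtain ⟨a, ha⟩ := hlarge
  obtain ⟨b, hb⟩ := hsmall
  obtain ⟨m, hm, hmax⟩ := Int.exists_greatest_of_bdd (P := fun k => u k ≤ y)
    ⟨a, fun k hk => (hmono.lt_iff_lt.mp (hk.trans_lt ha)).le⟩ ⟨-b, hb.le⟩
  exact ⟨m, fun k => ⟨hmax k, fun hk => (hmono.monotone hk).trans hm⟩⟩

end GeometricGrowth

lemma exists_forall_lt_iff_of_forall_le_iff {α : Type*} [LinearOrder α] {u : ℤ → α}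
    (hu : StrictMono u) {y : α} {m : ℤ} (hm : ∀ k, u k ≤ y ↔ k ≤ m) :
    ∃ e : ℤ, (e = m ∨ e = m + 1) ∧ ∀ k, u k < y ↔ k < e := by
  rcases ((hm m).mpr le_rfl).eq_or_lt with heq | hlt
  · exact ⟨m, .inl rfl, fun k => by rw [← heq, hu.lt_iff_lt]⟩
  · refine ⟨m + 1, .inr rfl, fun k => ?_⟩
    rw [Int.lt_add_one_iff]
    exact ⟨fun hk => (hm k).mp hk.le, fun hk => (hu.monotone hk).trans_lt hlt⟩

lemma ncard_Ioo_int (a b : ℤ) : (Ioo a b).ncard = (b - a - 1).toNat := by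
  rw [← Finset.coe_Ioo, Set.ncard_coe_finset, Int.card_Ioo]

lemma exists_pos_forall_mem_Ioo_of_isCompact {X : Type*} [TopologicalSpace X] {S : Set X}
    (hS : IsCompact S) {f : X → ℝ} (hf : ContinuousOn f S) (hpos : ∀ x ∈ S, 0 < f x) :
    ∃ c₀ C₀ : ℝ, 0 < c₀ ∧ c₀ < C₀ ∧ ∀ x ∈ S, f x ∈ Ioo c₀ C₀ := by
  obtain ⟨ε, hε, hεf⟩ := hS.exists_forall_le' hf hpos
  obtain ⟨M, hM⟩ := hS.bddAbove_image hf
  refine ⟨ε / 2, max M ε + 1, half_pos hε, ?_, fun x hx => ⟨?_, ?_⟩⟩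
  · linarith [le_max_right M ε]
  · linarith [hεf x hx]
  · linarith [hM (mem_image_of_mem f hx), le_max_left M ε]

lemma support_eq_interior_of_tsupport_subset {X Y : Type*} [TopologicalSpace X]
    [TopologicalSpace Y] [T1Space Y] [Zero Y] {p : X → Y} {S : Set X} (hp : Continuous p)
    (hsub : tsupport p ⊆ S) (hne : ∀ x ∈ interior S, p x ≠ 0) :
    Function.support p = interior S :=
  (interior_maximal ((subset_tsupport p).trans hsub) hp.isOpen_support).antisymm hne

lemma eventually_smul_mem_of_mem_interior {M X : Type*} [Monoid M] [TopologicalSpace M]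
    [TopologicalSpace X] [MulAction M X] [ContinuousSMul M X] {S : Set X} {x : X}
    (hx : x ∈ interior S) : ∀ᶠ t : M in 𝓝 1, t • x ∈ S := by
  have hscale : Continuous fun t : M => t • x := continuous_id.smul continuous_const
  refine hscale.continuousAt.eventually_mem ?_
  rwa [one_smul, ← mem_interior_iff_mem_nhds]

/-- A homogeneous quasinorm: a continuous, positively homogeneous function of degree one that is
positive away from the origin. It abstracts the Hermitian norm `‖x‖_* = √(xᵗKx)`. -/
structure IsHomogeneousQuasinorm {E : Type*} [TopologicalSpace E] [AddCommGroup E] [Module ℝ E]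
    (N : E → ℝ) : Prop where
  continuous : Continuous N
  map_smul_of_nonneg : ∀ {t : ℝ}, 0 ≤ t → ∀ x, N (t • x) = t * N x
  pos : ∀ {x}, x ≠ 0 → 0 < N x

namespace IsHomogeneousQuasinorm

section TopologicalModule

variable {E : Type*} [TopologicalSpace E] [AddCommGroup E] [Module ℝ E] {N : E → ℝ}

lemma map_zero (hN : IsHomogeneousQuasinorm N) : N 0 = 0 := by
  simpa using hN.map_smul_of_nonneg le_rfl 0

lemma comp_equiv {F : Type*} [TopologicalSpace F] [AddCommGroup F] [Module ℝ F]
    (hN : IsHomogeneousQuasinorm N) (T : F ≃L[ℝ] E) :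
    IsHomogeneousQuasinorm fun x => N (T x) where
  continuous := hN.continuous.comp T.continuous
  map_smul_of_nonneg ht x := by rw [map_smul, hN.map_smul_of_nonneg ht]
  pos hx := hN.pos (T.map_eq_zero_iff.not.mpr hx)

variable [ContinuousSMul ℝ E]

lemma lt_one_of_mem_interior (hN : IsHomogeneousQuasinorm N) {x : E}
    (hx : x ∈ interior {x | N x ≤ 1}) : N x < 1 := by
  obtain ⟨t, ht, ht1⟩ := (((eventually_smul_mem_of_mem_interior hx).filter_mono
    nhdsWithin_le_nhds).and (self_mem_nhdsWithin : Ioi (1 : ℝ) ∈ 𝓝[>] 1)).exists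
  have htN : t * N x ≤ 1 := hN.map_smul_of_nonneg (zero_le_one.trans ht1.le) x ▸ ht
  by_contra! h
  nlinarith [show 1 < t from ht1]

lemma one_lt_of_mem_interior (hN : IsHomogeneousQuasinorm N) {x : E}
    (hx : x ∈ interior {x | 1 ≤ N x}) : 1 < N x := by
  obtain ⟨t, ht, ht0, ht1⟩ := (((eventually_smul_mem_of_mem_interior hx).filter_mono
    nhdsWithin_le_nhds).and (Ioo_mem_nhdsLT (zero_lt_one (α := ℝ)))).exists
  have htN : 1 ≤ t * N x := hN.map_smul_of_nonneg ht0.le x ▸ ht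
  by_contra! h
  nlinarith

lemma interior_closure_setOf_le_one_and_one_lt {N' : E → ℝ} (hN : IsHomogeneousQuasinorm N)
    (hN' : IsHomogeneousQuasinorm N') :
    interior (closure {x | N x ≤ 1 ∧ 1 < N' x}) = {x | N x < 1 ∧ 1 < N' x} := by
  apply Subset.antisymm
  · have hclosure : closure {x | N x ≤ 1 ∧ 1 < N' x} ⊆ {x | N x ≤ 1} ∩ {x | 1 ≤ N' x} :=
      closure_minimal (fun x hx => ⟨hx.1, hx.2.le⟩)
        ((isClosed_le hN.continuous continuous_const).inter
          (isClosed_le continuous_const hN'.continuous))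
    intro x hx
    have hx' := interior_mono hclosure hx
    rw [interior_inter] at hx'
    exact ⟨hN.lt_one_of_mem_interior hx'.1, hN'.one_lt_of_mem_interior hx'.2⟩
  · exact interior_maximal (fun x hx => subset_closure ⟨le_of_lt hx.1, hx.2⟩)
      ((isOpen_lt hN.continuous continuous_const).inter
        (isOpen_lt continuous_const hN'.continuous))

end TopologicalModule

lemma isCompact_setOf_le_one {E : Type*} [NormedAddCommGroup E] [NormedSpace ℝ E] [ProperSpace E]
    {N : E → ℝ} (hN : IsHomogeneousQuasinorm N) : IsCompact {x | N x ≤ 1} := by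
  obtain ⟨ε, hε, hsphere⟩ := (isCompact_sphere (0 : E) 1).exists_forall_le'
    hN.continuous.continuousOn fun x hx => hN.pos (ne_zero_of_mem_unit_sphere ⟨x, hx⟩)
  have hlower (x : E) : ‖x‖ * ε ≤ N x := by
    rcases eq_or_ne x 0 with rfl | hx
    · simp [hN.map_zero]
    · have hnorm : 0 < ‖x‖ := norm_pos_iff.mpr hx
      have hunit := hsphere (‖x‖⁻¹ • x) (by simp [norm_smul, hnorm.ne'])
      rwa [hN.map_smul_of_nonneg (inv_nonneg.mpr hnorm.le), inv_mul_eq_div,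
        le_div_iff₀' hnorm] at hunit
  refine (isCompact_closedBall (0 : E) ε⁻¹).of_isClosed_subset
    (isClosed_le hN.continuous continuous_const) fun x hx => ?_
  rw [mem_closedBall_zero_iff, ← one_div, le_div_iff₀ hε]
  exact (hlower x).trans hx

end IsHomogeneousQuasinorm

section Iterates

variable {R M : Type*} [Semiring R] [AddCommMonoid M] [TopologicalSpace M] [Module R M]

lemma zpow_apply_zpow_apply (T : M ≃L[R] M) (i j : ℤ) (x : M) :
    (T ^ i) ((T ^ j) x) = (T ^ (i + j)) x := by
  rw [zpow_add]; rfl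

lemma image_zpow_eq_preimage (T : M ≃L[R] M) (j : ℤ) (S : Set M) :
    (T ^ j) '' S = (T ^ (-j)) ⁻¹' S := by
  rw [ContinuousLinearEquiv.image_eq_preimage_symm, zpow_neg]; rfl

end Iterates

section Dilations

variable {E : Type*} [TopologicalSpace E] [AddCommGroup E] [Module ℝ E]

/-- `T` expands the quasinorm `N` by a factor bounded away from `1`, as in `‖Bx‖_* ≥ λ‖x‖_*` with
`λ > 1`. -/
def IsUniformlyExpanding (N : E → ℝ) (T : E ≃L[ℝ] E) : Prop :=
  ∃ r > 1, ∀ x, r * N x ≤ N (T x)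

/-- The annulus `T^b(I_*) \ T^a(I_*)` between two dilates of the unit ball `I_* = {N ≤ 1}`. -/
def dilationAnnulus (N : E → ℝ) (T : E ≃L[ℝ] E) (a b : ℤ) : Set E :=
  (T ^ b) '' {x | N x ≤ 1} \ (T ^ a) '' {x | N x ≤ 1}

/-- The closed annulus `{N x ≤ 1 ≤ N (T x)}`. It meets every nonzero orbit of an expanding `T`; both
boundary components are included to make it compact. -/
def fundamentalAnnulus (N : E → ℝ) (T : E ≃L[ℝ] E) : Set E :=
  {x | N x ≤ 1 ∧ 1 ≤ N (T x)}

/-- The multiplicative periodization `w(x) = ∑_{j ∈ ℤ} p(T^j x)`; the sum is `0` at points where it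
does not converge. -/
def periodization (T : E ≃L[ℝ] E) (p : E → ℝ) (x : E) : ℝ :=
  ∑' j : ℤ, p ((T ^ j) x)

lemma periodization_zpow_apply (T : E ≃L[ℝ] E) (p : E → ℝ) (k : ℤ) (x : E) :
    periodization T p ((T ^ k) x) = periodization T p x := by
  simp only [periodization, zpow_apply_zpow_apply]
  exact (Equiv.addRight k).tsum_eq fun j => p ((T ^ j) x)

lemma dilationAnnulus_eq_setOf (N : E → ℝ) (T : E ≃L[ℝ] E) (a b : ℤ) :
    dilationAnnulus N T a b = {x | N ((T ^ (-b)) x) ≤ 1 ∧ 1 < N ((T ^ (-a)) x)} := by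
  ext x
  simp only [dilationAnnulus, image_zpow_eq_preimage, mem_sdiff, mem_preimage, mem_ofPred_eq,
    not_le]

namespace IsHomogeneousQuasinorm

variable {N : E → ℝ} {T : E ≃L[ℝ] E} {x : E}

lemma interior_closure_dilationAnnulus [ContinuousSMul ℝ E] (hN : IsHomogeneousQuasinorm N)
    (T : E ≃L[ℝ] E) (a b : ℤ) :
    interior (closure (dilationAnnulus N T a b)) =
      {x | N ((T ^ (-b)) x) < 1 ∧ 1 < N ((T ^ (-a)) x)} := by
  rw [dilationAnnulus_eq_setOf]
  exact interior_closure_setOf_le_one_and_one_lt (hN.comp_equiv _) (hN.comp_equiv _)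

lemma zpow_apply_pos (hN : IsHomogeneousQuasinorm N) (hx : x ≠ 0) (k : ℤ) :
    0 < N ((T ^ k) x) :=
  (hN.comp_equiv (T ^ k)).pos hx

lemma ne_zero_of_mem_fundamentalAnnulus (hN : IsHomogeneousQuasinorm N)
    (hx : x ∈ fundamentalAnnulus N T) : x ≠ 0 := by
  rintro rfl
  have h := hx.2
  rw [_root_.map_zero, hN.map_zero] at h
  exact absurd h (by norm_num)

lemma isCompact_fundamentalAnnulus {E : Type*} [NormedAddCommGroup E] [NormedSpace ℝ E]
    [ProperSpace E] {N : E → ℝ} (hN : IsHomogeneousQuasinorm N) (T : E ≃L[ℝ] E) :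
    IsCompact (fundamentalAnnulus N T) :=
  hN.isCompact_setOf_le_one.inter_right
    (isClosed_le continuous_const (hN.comp_equiv T).continuous)

end IsHomogeneousQuasinorm

section Orbit

variable {N : E → ℝ} {T : E ≃L[ℝ] E} {x : E}

lemma IsUniformlyExpanding.exists_forall_mul_zpow_apply_le (hT : IsUniformlyExpanding N T) :
    ∃ r > 1, ∀ (x : E) (k : ℤ), r * N ((T ^ k) x) ≤ N ((T ^ (k + 1)) x) := by
  obtain ⟨r, hr, hmul⟩ := hT
  refine ⟨r, hr, fun x k => ?_⟩
  rw [add_comm, zpow_one_add]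
  exact hmul _

lemma strictMono_zpow_apply (hN : IsHomogeneousQuasinorm N) (hT : IsUniformlyExpanding N T)
    (hx : x ≠ 0) : StrictMono fun k : ℤ => N ((T ^ k) x) := by
  obtain ⟨r, hr, hmul⟩ := hT.exists_forall_mul_zpow_apply_le
  exact strictMono_of_one_lt_of_mul_le_succ hr (hN.zpow_apply_pos hx) (hmul x)

lemma exists_forall_zpow_apply_le_one_iff (hN : IsHomogeneousQuasinorm N)
    (hT : IsUniformlyExpanding N T) (hx : x ≠ 0) :
    ∃ m : ℤ, ∀ k : ℤ, N ((T ^ k) x) ≤ 1 ↔ k ≤ m := by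
  obtain ⟨r, hr, hmul⟩ := hT.exists_forall_mul_zpow_apply_le
  exact exists_int_forall_le_iff_of_mul_le_succ hr (hN.zpow_apply_pos hx) (hmul x) one_pos

lemma exists_zpow_apply_mem_fundamentalAnnulus (hN : IsHomogeneousQuasinorm N)
    (hT : IsUniformlyExpanding N T) (hx : x ≠ 0) :
    ∃ k : ℤ, (T ^ k) x ∈ fundamentalAnnulus N T := by
  obtain ⟨m, hm⟩ := exists_forall_zpow_apply_le_one_iff hN hT hx
  have hsucc : ¬N ((T ^ (m + 1)) x) ≤ 1 := (hm _).not.mpr (by lia)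
  rw [add_comm, zpow_one_add] at hsucc
  exact ⟨m, (hm m).mpr le_rfl, (not_le.mp hsucc).le⟩

end Orbit

section AnnulusFunction

variable [ContinuousSMul ℝ E] {N : E → ℝ} {T : E ≃L[ℝ] E} {a b : ℤ} {p : E → ℝ} {x : E}

lemma zpow_apply_ne_zero_iff (hN : IsHomogeneousQuasinorm N)
    (hp : Function.support p = interior (closure (dilationAnnulus N T a b))) (j : ℤ) (x : E) :
    p ((T ^ j) x) ≠ 0 ↔ N ((T ^ (j - b)) x) < 1 ∧ 1 < N ((T ^ (j - a)) x) := by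
  rw [← Function.mem_support, hp, hN.interior_closure_dilationAnnulus, mem_ofPred_eq,
    zpow_apply_zpow_apply, zpow_apply_zpow_apply, neg_add_eq_sub, neg_add_eq_sub]

lemma exists_setOf_zpow_apply_ne_zero_eq_Ioo (hN : IsHomogeneousQuasinorm N)
    (hT : IsUniformlyExpanding N T)
    (hp : Function.support p = interior (closure (dilationAnnulus N T a b))) (hx : x ≠ 0) :
    ∃ m e : ℤ, (e = m ∨ e = m + 1) ∧ {j : ℤ | p ((T ^ j) x) ≠ 0} = Ioo (m + a) (e + b) := by
  obtain ⟨m, hm⟩ := exists_forall_zpow_apply_le_one_iff hN hT hx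
  obtain ⟨e, he, hlt⟩ :=
    exists_forall_lt_iff_of_forall_le_iff (strictMono_zpow_apply hN hT hx) hm
  refine ⟨m, e, he, ext fun j => ?_⟩
  rw [mem_ofPred_eq, zpow_apply_ne_zero_iff hN hp, hlt, ← not_le (b := (1 : ℝ)), hm, mem_Ioo]
  lia

lemma finite_setOf_zpow_apply_ne_zero (hN : IsHomogeneousQuasinorm N)
    (hT : IsUniformlyExpanding N T)
    (hp : Function.support p = interior (closure (dilationAnnulus N T a b))) (hx : x ≠ 0) :
    {j : ℤ | p ((T ^ j) x) ≠ 0}.Finite := by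
  obtain ⟨m, e, -, hset⟩ := exists_setOf_zpow_apply_ne_zero_eq_Ioo hN hT hp hx
  exact hset ▸ finite_Ioo _ _

lemma ncard_setOf_zpow_apply_ne_zero (hN : IsHomogeneousQuasinorm N) (hT : IsUniformlyExpanding N T)
    (hp : Function.support p = interior (closure (dilationAnnulus N T a b))) (hx : x ≠ 0) :
    {j : ℤ | p ((T ^ j) x) ≠ 0}.ncard = (b - a - 1).toNat ∨
      {j : ℤ | p ((T ^ j) x) ≠ 0}.ncard = (b - a).toNat := by
  obtain ⟨m, e, he, hset⟩ := exists_setOf_zpow_apply_ne_zero_eq_Ioo hN hT hp hx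
  rw [hset, ncard_Ioo_int]
  lia

lemma periodization_pos (hN : IsHomogeneousQuasinorm N) (hT : IsUniformlyExpanding N T)
    (hp : Function.support p = interior (closure (dilationAnnulus N T a b)))
    (hnonneg : ∀ x, 0 ≤ p x) (hab : a + 1 < b) (hx : x ≠ 0) : 0 < periodization T p x := by
  obtain ⟨m, e, he, hset⟩ := exists_setOf_zpow_apply_ne_zero_eq_Ioo hN hT hp hx
  have hmem : m + a + 1 ∈ {j : ℤ | p ((T ^ j) x) ≠ 0} := by
    rw [hset, mem_Ioo]
    lia
  exact (summable_of_hasFiniteSupport (finite_setOf_zpow_apply_ne_zero hN hT hp hx)).tsum_pos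
    (fun j => hnonneg _) _ ((hnonneg _).lt_of_ne' hmem)

lemma mem_Ioc_of_zpow_apply_ne_zero (hN : IsHomogeneousQuasinorm N) (hT : IsUniformlyExpanding N T)
    (hp : Function.support p = interior (closure (dilationAnnulus N T a b)))
    (hx : x ∈ fundamentalAnnulus N T) {j : ℤ} (hj : p ((T ^ j) x) ≠ 0) : j ∈ Ioc a b := by
  have hmono := strictMono_zpow_apply hN hT (hN.ne_zero_of_mem_fundamentalAnnulus hx)
  obtain ⟨hlt, hgt⟩ := (zpow_apply_ne_zero_iff hN hp j x).mp hj
  have hzero : N ((T ^ (0 : ℤ)) x) ≤ 1 := by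
    rw [zpow_zero]
    exact hx.1
  have hone : 1 ≤ N ((T ^ (1 : ℤ)) x) := by
    rw [zpow_one]
    exact hx.2
  have hupper : j - b < 1 := hmono.lt_iff_lt.mp (hlt.trans_le hone)
  have hlower : 0 < j - a := hmono.lt_iff_lt.mp (hzero.trans_lt hgt)
  exact ⟨by lia, by lia⟩

lemma continuousOn_periodization (hN : IsHomogeneousQuasinorm N) (hT : IsUniformlyExpanding N T)
    (hp : Function.support p = interior (closure (dilationAnnulus N T a b)))
    (hcont : Continuous p) : ContinuousOn (periodization T p) (fundamentalAnnulus N T) := by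
  have hsum : Continuous fun x => ∑ j ∈ Finset.Ioc a b, p ((T ^ j) x) := by fun_prop
  refine hsum.continuousOn.congr fun x hx => tsum_eq_sum fun j hj => ?_
  by_contra h
  exact hj (Finset.mem_Ioc.mpr (mem_Ioc_of_zpow_apply_ne_zero hN hT hp hx h))

end AnnulusFunction

lemma exists_bounds_periodization {E : Type*} [NormedAddCommGroup E] [NormedSpace ℝ E]
    [ProperSpace E] {N : E → ℝ} {T : E ≃L[ℝ] E} {a b : ℤ} {p : E → ℝ}
    (hN : IsHomogeneousQuasinorm N) (hT : IsUniformlyExpanding N T)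
    (hp : Function.support p = interior (closure (dilationAnnulus N T a b)))
    (hcont : Continuous p) (hnonneg : ∀ x, 0 ≤ p x) (hab : a + 1 < b) :
    ∃ c₀ C₀ : ℝ, 0 < c₀ ∧ c₀ < C₀ ∧
      ∀ x : E, x ≠ 0 → c₀ < periodization T p x ∧ periodization T p x < C₀ := by
  obtain ⟨c₀, C₀, hc₀, hlt, hbounds⟩ := exists_pos_forall_mem_Ioo_of_isCompact
    (hN.isCompact_fundamentalAnnulus T) (continuousOn_periodization hN hT hp hcont) fun _ hx =>
      periodization_pos hN hT hp hnonneg hab (hN.ne_zero_of_mem_fundamentalAnnulus hx)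
  refine ⟨c₀, C₀, hc₀, hlt, fun x hx => ?_⟩
  obtain ⟨k, hk⟩ := exists_zpow_apply_mem_fundamentalAnnulus hN hT hx
  exact periodization_zpow_apply T p k x ▸ hbounds _ hk

end Dilations

theorem periodization_bounded_general {E : Type*} [NormedAddCommGroup E] [NormedSpace ℝ E]
    [ProperSpace E] {N : E → ℝ} (hN : IsHomogeneousQuasinorm N) (T : E ≃L[ℝ] E)
    (hT : IsUniformlyExpanding N T) (c : ℤ) {d : ℕ} (hd : 1 ≤ d) {p : E → ℝ}
    (hcont : Continuous p) (hsupp : tsupport p ⊆ closure (dilationAnnulus N T (c - d - 1) c))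
    (hpos : ∀ x ∈ interior (closure (dilationAnnulus N T (c - d - 1) c)), 0 < p x) :
    (∀ x : E, x ≠ 0 →
      {j : ℤ | p ((T ^ j) x) ≠ 0}.Finite ∧
      ({j : ℤ | p ((T ^ j) x) ≠ 0}.ncard = d ∨ {j : ℤ | p ((T ^ j) x) ≠ 0}.ncard = d + 1)) ∧
    ∃ c₀ C₀ : ℝ, 0 < c₀ ∧ c₀ < C₀ ∧
      ∀ x : E, x ≠ 0 → c₀ < periodization T p x ∧ periodization T p x < C₀ := by
  have hsupport := support_eq_interior_of_tsupport_subset hcont hsupp fun x hx => (hpos x hx).ne'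
  have hnonneg (x : E) : 0 ≤ p x := by
    by_cases hx : p x = 0
    · exact hx.ge
    · exact (hpos x (hsupport ▸ hx)).le
  refine ⟨fun x hx => ⟨finite_setOf_zpow_apply_ne_zero hN hT hsupport hx, ?_⟩,
    exists_bounds_periodization hN hT hsupport hcont hnonneg (by lia)⟩
  have hcard := ncard_setOf_zpow_apply_ne_zero hN hT hsupport hx
  rwa [show (c - (c - d - 1) - 1).toNat = d by lia,
    show (c - (c - d - 1)).toNat = d + 1 by lia] at hcard

section Matrices

open Matrix

variable {ι : Type*} [Fintype ι]

/-- Invertible matrices as continuous linear automorphisms of the coordinate space. -/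
def mulVecEquiv {𝕜 : Type*} [NontriviallyNormedField 𝕜] [CompleteSpace 𝕜] [DecidableEq ι] :
    GL ι 𝕜 ≃* ((ι → 𝕜) ≃L[𝕜] (ι → 𝕜)) :=
  Matrix.GeneralLinearGroup.toLin.trans
    ((Units.mapEquiv (Module.End.toContinuousLinearMap (ι → 𝕜)).toMulEquiv).trans
      (ContinuousLinearEquiv.unitsEquiv 𝕜 (ι → 𝕜)))

lemma mulVecEquiv_zpow_apply {𝕜 : Type*} [NontriviallyNormedField 𝕜] [CompleteSpace 𝕜]
    [DecidableEq ι] (B : GL ι 𝕜) (j : ℤ) (x : ι → 𝕜) :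
    (mulVecEquiv B ^ j) x = (B.val ^ j) *ᵥ x := by
  rw [← map_zpow, ← Matrix.coe_units_zpow]; rfl

lemma isHomogeneousQuasinorm_sqrt_dotProduct_mulVec {K : Matrix ι ι ℝ} (hK : K.PosDef) :
    IsHomogeneousQuasinorm fun x => √(x ⬝ᵥ K *ᵥ x) where
  continuous := by fun_prop
  map_smul_of_nonneg {t} ht x := by
    rw [mulVec_smul, dotProduct_smul, smul_dotProduct, smul_smul, smul_eq_mul, ← sq,
      Real.sqrt_mul (sq_nonneg t), Real.sqrt_sq ht]
  pos hx := Real.sqrt_pos.mpr (by simpa using hK.dotProduct_mulVec_pos hx)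

end Matrices

open Matrix in
/-- Example 4.2: for a continuous nonnegative bump `p` on the annulus
`B^c(I_*) \ B^{c-d-1}(I_*)`, the periodization `w(x) = ∑_{j∈ℤ} p(B^j x)` has, for each
`x ≠ 0`, either `d` or `d+1` nonzero terms, and is bounded away from `0` and `∞`. -/
theorem periodization_bounded
    {n : ℕ}
    (B : Matrix (Fin n) (Fin n) ℝ) (hBu : IsUnit B.det) (hB : IsExpansive B)
    (K : Matrix (Fin n) (Fin n) ℝ) (hK : K.PosDef)
    (lam : ℝ) (hlam : 1 < lam)
    (hnorm : ∀ x : ℝn n,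
      Real.sqrt (dotProduct (B.mulVec x) (K.mulVec (B.mulVec x))) ≥
        lam * Real.sqrt (dotProduct x (K.mulVec x)))
    (Istar : Set (ℝn n)) (hI : Istar = {x : ℝn n | dotProduct x (K.mulVec x) ≤ 1})
    (c : ℤ) (d : ℕ) (hd : 1 ≤ d)
    (p : ℝn n → ℝ) (hpcont : Continuous p) (hpnonneg : ∀ x, 0 ≤ p x)
    (hpsupp : tsupport p = closure (mimg (B ^ c) Istar \ mimg (B ^ (c - (d : ℤ) - 1)) Istar))
    (hppos : ∀ x ∈ interior
      (closure (mimg (B ^ c) Istar \ mimg (B ^ (c - (d : ℤ) - 1)) Istar)), 0 < p x)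
    (w : ℝn n → ℝ) (hw : w = fun x => ∑' j : ℤ, p ((B ^ j).mulVec x)) :
    (∀ x : ℝn n, x ≠ 0 →
      {j : ℤ | p ((B ^ j).mulVec x) ≠ 0}.Finite ∧
      ({j : ℤ | p ((B ^ j).mulVec x) ≠ 0}.ncard = d ∨
        {j : ℤ | p ((B ^ j).mulVec x) ≠ 0}.ncard = d + 1)) ∧
    ∃ c₀ C₀ : ℝ, 0 < c₀ ∧ c₀ < C₀ ∧
      ∀ x : ℝn n, x ≠ 0 → c₀ < w x ∧ w x < C₀ := by
  obtain ⟨B, rfl⟩ := (Matrix.isUnit_iff_isUnit_det B).mpr hBu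
  have hball : Istar = {x | √(x ⬝ᵥ K *ᵥ x) ≤ 1} := by simp [hI]
  have hzpow (j : ℤ) : mimg (B.val ^ j) Istar =
      (mulVecEquiv B ^ j) '' {x | √(x ⬝ᵥ K *ᵥ x) ≤ 1} := by
    simp only [mimg, hball, mulVecEquiv_zpow_apply]
  rw [hzpow, hzpow] at hpsupp hppos
  rw [hw]
  simpa only [periodization, mulVecEquiv_zpow_apply] using periodization_bounded_general
    (isHomogeneousQuasinorm_sqrt_dotProduct_mulVec hK) (mulVecEquiv B) ⟨lam, hlam, hnorm⟩ c hd
    hpcont hpsupp.subset hppos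

end
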